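/- arXiv:math/0609697 — 3 statements merged into one kernel-verified Lean document; each statement's English description precedes it below -/
import Mathlib

section
/- Suppose that w = 0 (i.e., σ(n) = 0) and there is exactly one index i₀ ∈ {0,…,n−1} with θ_{i₀} < 0, while θ_j > 0 for all j ∈ {0,…,n−1} with j ≠ i₀. Then Δ_{j,i,i⊕1} > 0 for every i ∈ {0,…,n−1} and every j ∈ {0,…,n−1} \ {i, i⊕1}. -/
/-!
The determinant factors as
`Δ_{a,b,c} = 4 sin ((σ b - σ a)/2) sin ((σ c - σ b)/2) sin ((σ c - σ a)/2)`, so it is positive as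
soon as `σ a < σ b < σ c` with `σ c - σ a < 2π` (`det3_pos_of_lt`), and it is invariant under cyclic
permutation of the indices (`det3_cycle`).

Since `σ 0 = σ n = 0`, the sequence `σ` increases strictly from `0` to `σ i₀`, drops by less than
`π`, and then increases strictly from `σ (i₀ + 1)` back to `0`. Hence all its values lie in
`[σ (i₀ + 1), σ i₀]`, an interval of length less than `π`, and no triple wraps around the circle.
Read in increasing order of angle, the vertices are `V_{i₀+1}, …, V_{n-1}, V_0, …, V_{i₀}`, with
`i ⊕ 1` the cyclic successor of `i`; so `j, i, i ⊕ 1` is always in increasing order up to a cyclic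
permutation.
-/

open Real Set

/-- The vertex `V_i = (cos σ(i), sin σ(i))` on the unit circle. -/
noncomputable def Vtx (σ : ℕ → ℝ) (i : ℕ) : ℝ × ℝ := (Real.cos (σ i), Real.sin (σ i))

/-- The determinant `Δ_{a,b,c}`. -/
noncomputable def Det3 (σ : ℕ → ℝ) (a b c : ℕ) : ℝ :=
  Matrix.det !![1, Real.cos (σ a), Real.sin (σ a);
                1, Real.cos (σ b), Real.sin (σ b);
                1, Real.cos (σ c), Real.sin (σ c)]

/-- `i ⊕ 1`: equals `i+1` for `i ≤ n-2` and `0` for `i = n-1`. -/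
def oplus (n i : ℕ) : ℕ := if i + 1 < n then i + 1 else 0

/-- The polygon is ordinary: the vertices `V_0, …, V_{n-1}` are pairwise distinct. -/
def Ordinary (n : ℕ) (σ : ℕ → ℝ) : Prop :=
  ∀ i < n, ∀ j < n, Vtx σ i = Vtx σ j → i = j

/-- The polygon is convex: the union of its edges equals the topological boundary of the
convex hull of its vertex set. -/
def IsConvexPolygon (n : ℕ) (σ : ℕ → ℝ) : Prop :=
  (⋃ i ∈ Finset.range n, segment ℝ (Vtx σ i) (Vtx σ (i + 1))) =
    frontier (convexHull ℝ {p | ∃ i < n, p = Vtx σ i})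

/-- The points of `S` are strictly to one side of the segment `[P₀, P₁]`: the line through
the distinct points `P₀` and `P₁` is the boundary of an open half-plane containing `S`. -/
def StrictlyOneSide (P₀ P₁ : ℝ × ℝ) (S : Set (ℝ × ℝ)) : Prop :=
  P₀ ≠ P₁ ∧ ∃ a b c : ℝ, (a, b) ≠ (0, 0) ∧
    a * P₀.1 + b * P₀.2 = c ∧ a * P₁.1 + b * P₁.2 = c ∧
    ∀ Q ∈ S, a * Q.1 + b * Q.2 > c

theorem det3_cycle (σ : ℕ → ℝ) (a b c : ℕ) : Det3 σ a b c = Det3 σ b c a := by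
  simp only [Det3, Matrix.det_fin_three, Matrix.of_apply, Matrix.cons_val]
  ring

theorem det3_eq (σ : ℕ → ℝ) (a b c : ℕ) :
    Det3 σ a b c =
      4 * (sin ((σ b - σ a) / 2) * sin ((σ c - σ b) / 2) * sin ((σ c - σ a) / 2)) := by
  -- In terms of half angles `x, y, z`, both sides are polynomials in the sines and cosines.
  obtain ⟨x, hx⟩ : ∃ x, σ a = 2 * x := ⟨σ a / 2, by ring⟩
  obtain ⟨y, hy⟩ : ∃ y, σ b = 2 * y := ⟨σ b / 2, by ring⟩
  obtain ⟨z, hz⟩ : ∃ z, σ c = 2 * z := ⟨σ c / 2, by ring⟩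
  have h1 : (2 * y - 2 * x) / 2 = y - x := by ring
  have h2 : (2 * z - 2 * y) / 2 = z - y := by ring
  have h3 : (2 * z - 2 * x) / 2 = z - x := by ring
  simp only [Det3, Matrix.det_fin_three, Matrix.of_apply, Matrix.cons_val, hx, hy, hz, h1, h2, h3,
    sin_sub, cos_two_mul', sin_two_mul]
  have ex := sin_sq_add_cos_sq x
  have ey := sin_sq_add_cos_sq y
  have ez := sin_sq_add_cos_sq z
  generalize sin x = sx at *
  generalize cos x = cx at *
  generalize sin y = sy at *
  generalize cos y = cy at *
  generalize sin z = sz at *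
  generalize cos z = cz at *
  grind

/-- Angles increasing within less than a full turn span a positively oriented triangle. -/
theorem det3_pos_of_lt (σ : ℕ → ℝ) (a b c : ℕ) (hab : σ a < σ b) (hbc : σ b < σ c)
    (hac : σ c - σ a < 2 * π) : 0 < Det3 σ a b c := by
  rw [det3_eq]
  have h1 : 0 < sin ((σ b - σ a) / 2) := sin_pos_of_pos_of_lt_pi (by linarith) (by linarith)
  have h2 : 0 < sin ((σ c - σ b) / 2) := sin_pos_of_pos_of_lt_pi (by linarith) (by linarith)
  have h3 : 0 < sin ((σ c - σ a) / 2) := sin_pos_of_pos_of_lt_pi (by linarith) (by linarith)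
  positivity

theorem lt_of_step (σ : ℕ → ℝ) (l u : ℕ) (h : ∀ k, l ≤ k → k < u → σ k < σ (k + 1)) (a b : ℕ)
    (hl : l ≤ a) (hab : a < b) (hu : b ≤ u) : σ a < σ b := by
  induction b, hab using Nat.le_induction with
  | base => exact h a hl (by omega)
  | succ k hk ih => exact (ih (by omega)).trans (h k (by omega) (by omega))

theorem det_pos_of_case_III
    (n : ℕ) (hn : 3 ≤ n) (σ : ℕ → ℝ) (hσ0 : σ 0 = 0)
    (hθ : ∀ i < n, σ (i + 1) - σ i ∈ Set.Ioc (-π) π)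
    (w : ℤ) (hw : σ n = 2 * π * w)
    (hw0 : w = 0) (i₀ : ℕ) (hi₀ : i₀ < n) (hneg : σ (i₀ + 1) - σ i₀ < 0)
    (hpos : ∀ j < n, j ≠ i₀ → 0 < σ (j + 1) - σ j) :
    ∀ i < n, ∀ j < n, j ≠ i → j ≠ oplus n i → 0 < Det3 σ j i (oplus n i) := by
  have hσn : σ n = 0 := by rw [hw, hw0]; simp
  have inc1 : ∀ a b, a < b → b ≤ i₀ → σ a < σ b := fun a b hab hb =>
    lt_of_step σ 0 i₀ (fun k _ hk => by linarith [hpos k (by omega) (by omega)]) a b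
      (Nat.zero_le a) hab hb
  have inc2 : ∀ a b, i₀ + 1 ≤ a → a < b → b ≤ n → σ a < σ b :=
    lt_of_step σ (i₀ + 1) n (fun k hk hk' => by linarith [hpos k (by omega) (by omega)])
  have nonneg : ∀ a, a ≤ i₀ → 0 ≤ σ a := fun a ha => by
    rcases Nat.eq_zero_or_pos a with rfl | h
    · exact hσ0.ge
    · exact hσ0 ▸ (inc1 0 a h ha).le
  have neg : ∀ a, i₀ < a → a < n → σ a < 0 := fun a ha han => hσn ▸ inc2 a n ha han le_rfl
  have lower : ∀ a < n, σ (i₀ + 1) ≤ σ a := fun a ha => by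
    rcases le_or_gt a i₀ with h | h
    · have h0 : σ (i₀ + 1) ≤ 0 := by
        rcases (show i₀ + 1 ≤ n from hi₀).eq_or_lt with e | e
        · rw [e, hσn]
        · exact (neg _ (by omega) e).le
      linarith [nonneg a h]
    · rcases (show i₀ + 1 ≤ a from h).eq_or_lt with e | e
      · rw [e]
      · exact (inc2 _ _ le_rfl e ha.le).le
  have upper : ∀ a < n, σ a ≤ σ i₀ := fun a ha => by
    rcases lt_trichotomy a i₀ with h | rfl | h
    · exact (inc1 a i₀ h le_rfl).le
    · exact le_rfl
    · linarith [neg a h ha, nonneg i₀ le_rfl]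
  have spread : ∀ a < n, ∀ b < n, σ a - σ b < 2 * π := fun a ha b hb => by
    linarith [(hθ i₀ hi₀).1, lower b hb, upper a ha, pi_pos]
  intro i hi j hj hji hjs
  have hs : oplus n i < n := by unfold oplus; split_ifs <;> omega
  have order : (σ j < σ i ∧ σ i < σ (oplus n i)) ∨ (σ i < σ (oplus n i) ∧ σ (oplus n i) < σ j) ∨
      (σ (oplus n i) < σ j ∧ σ j < σ i) := by
    have hσs : σ (oplus n i) = σ (i + 1) := by
      unfold oplus
      split_ifs with h
      · rfl
      · rw [show i + 1 = n by omega, hσ0, hσn]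
    have hjs' : j ≠ i + 1 := fun h => hjs (by rw [oplus, if_pos (h ▸ hj), h])
    rcases eq_or_ne i i₀ with rfl | hne
    · -- At the drop, `V_{i ⊕ 1}` has the least angle and `V_i` the greatest.
      refine Or.inr (Or.inr ⟨?_, ?_⟩)
      · rw [hσs]
        rcases lt_or_gt_of_ne hji with h | h
        · by_cases h' : i + 1 < n
          · linarith [neg _ (Nat.lt_succ_self i) h', nonneg j h.le]
          · -- Here `i = n - 1`, so `i ⊕ 1 = 0` and `0 < j`.
            have hj0 : j ≠ 0 := fun h0 => hjs (by rw [oplus, if_neg h', h0])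
            have := inc1 0 j (by omega) h.le
            rw [show i + 1 = n by omega, hσn]
            linarith
        · exact inc2 _ _ le_rfl (by omega) hj.le
      · rcases lt_or_gt_of_ne hji with h | h
        · exact inc1 _ _ h le_rfl
        · linarith [neg j h hj, nonneg i le_rfl]
    · have hstep : σ i < σ (oplus n i) := by rw [hσs]; linarith [hpos i hi hne]
      suffices h : σ j < σ i ∨ σ (oplus n i) < σ j by tauto
      rw [hσs]
      rcases lt_or_gt_of_ne hne with h | h
      · rcases le_or_gt j i₀ with h' | h'
        · rcases lt_or_gt_of_ne hji with h2 | h2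
          · exact Or.inl (inc1 _ _ h2 h.le)
          · exact Or.inr (inc1 _ _ (by omega) h')
        · exact Or.inl (by linarith [neg j h' hj, nonneg i h.le])
      · rcases le_or_gt j i₀ with h' | h'
        · right
          by_cases h2 : i + 1 < n
          · linarith [neg (i + 1) (by omega) h2, nonneg j h']
          · have hj0 : j ≠ 0 := fun h0 => hjs (by rw [oplus, if_neg h2, h0])
            have := inc1 0 j (by omega) h'
            rw [show i + 1 = n by omega, hσn]
            linarith
        · rcases lt_or_gt_of_ne hji with h2 | h2
          · exact Or.inl (inc2 _ _ h' h2 hi.le)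
          · exact Or.inr (inc2 _ _ (by omega) (by omega) hj.le)
  rcases order with ⟨h1, h2⟩ | ⟨h1, h2⟩ | ⟨h1, h2⟩
  · exact det3_pos_of_lt σ _ _ _ h1 h2 (spread _ hs _ hj)
  · rw [det3_cycle]
    exact det3_pos_of_lt σ _ _ _ h1 h2 (spread _ hj _ hi)
  · rw [← det3_cycle]
    exact det3_pos_of_lt σ _ _ _ h1 h2 (spread _ hi _ hs)
end

section
/- Suppose that for some i, j, k ∈ {0,…,n−1} there exist integers p and q such that either (or1): σ(j) + 2πp ∈ (σ(i), σ(i+1)) and σ(k) + 2πq ∈ (σ(i+1), σ(i) + 2π), or (or2): σ(j) + 2πp ∈ (σ(i+1), σ(i)) and σ(k) + 2πq ∈ (σ(i), σ(i+1) + 2π). Then Δ_{j,i,i⊕1} · Δ_{k,i,i⊕1} < 0. -/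
/-!
The determinant of three points of the unit circle with polar angles `x`, `a`, `b` factors as
`4 sin ((a - x) / 2) sin ((b - a) / 2) sin ((b - x) / 2)` (`det_circle`). It is unchanged when an
angle is shifted by a multiple of `2π`, so `x` may be replaced by a lift of the vertex in the
prescribed interval, and the vertex `i ⊕ 1` by the angle `σ (i + 1)` also when `i = n - 1`.
All half-differences then lie in `(-π, 0)` or `(0, π)`, where the sign of the sine is known: the
two determinants share the factor `sin ((b - a) / 2)`, and among the remaining factors exactly one
determinant has its two sines of opposite signs.
-/

open Real Set

/-- Half-angle factorization of the determinant of three points on the unit circle. -/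
lemma det_circle (x a b : ℝ) :
    Matrix.det !![1, Real.cos x, Real.sin x;
                  1, Real.cos a, Real.sin a;
                  1, Real.cos b, Real.sin b] =
      4 * sin ((a - x) / 2) * sin ((b - a) / 2) * sin ((b - x) / 2) := by
  have key : ∀ P Q : ℝ, sin (2 * Q) + sin (2 * P) - sin (2 * (P + Q)) =
      4 * sin P * sin Q * sin (P + Q) := by
    intro P Q
    rw [sin_two_mul, sin_two_mul, sin_two_mul, sin_add, cos_add]
    linear_combination (-2 * sin Q * cos Q) * sin_sq_add_cos_sq P
      - 2 * sin P * cos P * sin_sq_add_cos_sq Q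
  have h := key ((a - x) / 2) ((b - a) / 2)
  rw [show 2 * ((b - a) / 2) = b - a by ring, show 2 * ((a - x) / 2) = a - x by ring,
    show (a - x) / 2 + (b - a) / 2 = (b - x) / 2 by ring,
    show 2 * ((b - x) / 2) = b - x by ring] at h
  rw [← h, Matrix.det_fin_three, sin_sub, sin_sub, sin_sub]
  simp
  ring

/-- The determinant with vertices `i`, `i ⊕ 1` may be computed from any lift of the angle `σ m`
and from the angle `σ (i + 1)`, since `σ n` is congruent to `σ 0 = 0` modulo `2π`. -/
lemma Det3_oplus (n : ℕ) (σ : ℕ → ℝ) (hσ0 : σ 0 = 0) (w : ℤ) (hw : σ n = 2 * π * w)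
    (i m : ℕ) (hi : i < n) (p : ℤ) :
    Det3 σ m i (oplus n i) =
      4 * sin ((σ i - (σ m + 2 * π * p)) / 2) * sin ((σ (i + 1) - σ i) / 2)
        * sin ((σ (i + 1) - (σ m + 2 * π * p)) / 2) := by
  have hshift : ∀ (t : ℝ) (z : ℤ),
      cos (t + 2 * π * z) = cos t ∧ sin (t + 2 * π * z) = sin t := by
    intro t z
    rw [mul_comm (2 * π)]
    exact ⟨cos_add_int_mul_two_pi t z, sin_add_int_mul_two_pi t z⟩
  have hend : cos (σ (oplus n i)) = cos (σ (i + 1)) ∧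
      sin (σ (oplus n i)) = sin (σ (i + 1)) := by
    unfold oplus
    split_ifs with hlt
    · exact ⟨rfl, rfl⟩
    · obtain rfl : n = i + 1 := by omega
      have hz := hshift 0 w
      rw [zero_add] at hz
      rw [hσ0, hw]
      exact ⟨hz.1.symm, hz.2.symm⟩
  rw [← det_circle, Det3, hend.1, hend.2, (hshift (σ m) p).1, (hshift (σ m) p).2]

/-- The sine of half an angle in `(-2π, 0)` is negative. -/
lemma sin_half_neg {t : ℝ} (h0 : t < 0) (h1 : -(2 * π) < t) : sin (t / 2) < 0 :=
  sin_neg_of_neg_of_neg_pi_lt (by linarith) (by linarith)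

/-- The sine of half an angle in `(0, 2π)` is positive. -/
lemma sin_half_pos {t : ℝ} (h0 : 0 < t) (h1 : t < 2 * π) : 0 < sin (t / 2) :=
  sin_pos_of_pos_of_lt_pi (by linarith) (by linarith)

theorem det_product_neg
    (n : ℕ) (hn : 3 ≤ n) (σ : ℕ → ℝ) (hσ0 : σ 0 = 0)
    (hθ : ∀ i < n, σ (i + 1) - σ i ∈ Set.Ioc (-π) π)
    (w : ℤ) (hw : σ n = 2 * π * w)
    (i j k : ℕ) (hi : i < n) (hj : j < n) (hk : k < n)
    (h : ∃ p q : ℤ,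
      (σ j + 2 * π * p ∈ Set.Ioo (σ i) (σ (i + 1)) ∧
        σ k + 2 * π * q ∈ Set.Ioo (σ (i + 1)) (σ i + 2 * π)) ∨
      (σ j + 2 * π * p ∈ Set.Ioo (σ (i + 1)) (σ i) ∧
        σ k + 2 * π * q ∈ Set.Ioo (σ i) (σ (i + 1) + 2 * π))) :
    Det3 σ j i (oplus n i) * Det3 σ k i (oplus n i) < 0 := by
  have hπ := pi_pos
  obtain ⟨hθ1, hθ2⟩ := hθ i hi
  obtain ⟨p, q, h⟩ := h
  rw [Det3_oplus n σ hσ0 w hw i j hi p, Det3_oplus n σ hσ0 w hw i k hi q]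
  generalize σ j + 2 * π * p = x at h ⊢
  generalize σ k + 2 * π * q = y at h ⊢
  generalize σ i = a at *
  generalize σ (i + 1) = b at *
  rcases h with ⟨⟨hx1, hx2⟩, hy1, hy2⟩ | ⟨⟨hx1, hx2⟩, hy1, hy2⟩
  · have s1 : sin ((a - x) / 2) < 0 := sin_half_neg (by linarith) (by linarith)
    have s2 : 0 < sin ((b - a) / 2) := sin_half_pos (by linarith) (by linarith)
    have s3 : 0 < sin ((b - x) / 2) := sin_half_pos (by linarith) (by linarith)
    have s4 : sin ((a - y) / 2) < 0 := sin_half_neg (by linarith) (by linarith)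
    have s5 : sin ((b - y) / 2) < 0 := sin_half_neg (by linarith) (by linarith)
    apply mul_neg_of_neg_of_pos
    · exact mul_neg_of_neg_of_pos (mul_neg_of_neg_of_pos (by linarith) s2) s3
    · exact mul_pos_of_neg_of_neg (mul_neg_of_neg_of_pos (by linarith) s2) s5
  · have s1 : 0 < sin ((a - x) / 2) := sin_half_pos (by linarith) (by linarith)
    have s2 : sin ((b - a) / 2) < 0 := sin_half_neg (by linarith) (by linarith)
    have s3 : sin ((b - x) / 2) < 0 := sin_half_neg (by linarith) (by linarith)
    have s4 : sin ((a - y) / 2) < 0 := sin_half_neg (by linarith) (by linarith)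
    have s5 : sin ((b - y) / 2) < 0 := sin_half_neg (by linarith) (by linarith)
    apply mul_neg_of_pos_of_neg
    · exact mul_pos_of_neg_of_neg (mul_neg_of_pos_of_neg (by linarith) s2) s3
    · exact mul_neg_of_pos_of_neg (mul_pos_of_neg_of_neg (by linarith) s2) s5
end

section
/- Let P = (V_0,…,V_{n−1}) be an ordinary cyclic polygon as in the setup. Then P is convex if and only if for each i ∈ {0,…,n−1} the determinants Δ_{j,i,i⊕1} have the same sign for all j ∈ {0,…,n−1} \ {i, i⊕1}, i.e., for each such i either Δ_{j,i,i⊕1} > 0 for all such j, or Δ_{j,i,i⊕1} < 0 for all such j. -/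
/-!
Both directions rest on supporting lines. As the vertices are distinct points of a circle, no three
are collinear (`orient_ne_zero`), so the convex hull `K` has interior points and a point of `K` is
on the frontier exactly when a nonzero linear functional attains its maximum over `K` there
(`exists_support`, `mem_frontier_of_support`).

If the polygon is convex, the functional supporting `K` at the midpoint of an edge is maximal at
both endpoints of that edge and, by non-collinearity, strictly smaller at every other vertex; the
determinants `Δ_{j,i,i⊕1}` are these differences times a nonzero constant depending only on `i`
(`orient_mul_normSq`).

Conversely, say that two vertices are neighbours if all the others lie strictly on one side of the
line through them. The determinant condition says that every edge joins neighbours, so every edge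
is in the frontier. A frontier point lies on a segment between two vertices at which a supporting
functional is maximal, hence between neighbours. A vertex cannot have three neighbours
(`no_three_neighbours`), and its predecessor and successor are already two, so this segment
is an edge.
-/

open Real Set

/-! ### Triples of points on the unit circle -/

/-- The (doubled, signed) area of the triangle `PQR`. -/
def orient (P Q R : ℝ × ℝ) : ℝ :=
  (Q.1 - P.1) * (R.2 - P.2) - (R.1 - P.1) * (Q.2 - P.2)

lemma det3_eq_orient (σ : ℕ → ℝ) (a b c : ℕ) :
    Det3 σ a b c = orient (Vtx σ a) (Vtx σ b) (Vtx σ c) := by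
  simp only [Det3, orient, Vtx, Matrix.det_fin_three, Matrix.of_apply, Matrix.cons_val]
  ring

lemma normSq_pos {p q : ℝ} (h : (p, q) ≠ (0, 0)) : 0 < p ^ 2 + q ^ 2 := by
  by_contra hle
  have h1 : p = 0 := by nlinarith [sq_nonneg p, sq_nonneg q]
  have h2 : q = 0 := by nlinarith [sq_nonneg p, sq_nonneg q]
  exact h (by rw [h1, h2])

/-- A line meets the unit circle in at most two points. -/
lemma orient_ne_zero {P Q R : ℝ × ℝ} (hP : P.1 ^ 2 + P.2 ^ 2 = 1) (hQ : Q.1 ^ 2 + Q.2 ^ 2 = 1)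
    (hR : R.1 ^ 2 + R.2 ^ 2 = 1) (hPQ : P ≠ Q) (hPR : P ≠ R) (hQR : Q ≠ R) :
    orient P Q R ≠ 0 := by
  obtain ⟨a, b⟩ := P
  obtain ⟨c, d⟩ := Q
  obtain ⟨e, f⟩ := R
  simp only [orient] at *
  intro h
  -- With `u = Q - P` and `v = R - P` parallel and `2 P·u = -|u|²`, `2 P·v = -|v|²`, one gets
  -- `|u|² (|v|² - u·v) = 0` and `|v|² (|u|² - u·v) = 0`, hence `|u|² |v|² |u - v|² = 0`.
  have key : ((c - a) ^ 2 + (d - b) ^ 2) * ((e - a) ^ 2 + (f - b) ^ 2)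
      * ((e - c) ^ 2 + (f - d) ^ 2) = 0 := by
    have h1 : ((c - a) ^ 2 + (d - b) ^ 2) *
        ((e - a) ^ 2 + (f - b) ^ 2 - ((c - a) * (e - a) + (d - b) * (f - b))) = 0 := by
      linear_combination ((c - a) ^ 2 + (d - b) ^ 2) * (hR - hP)
        - ((c - a) * (e - a) + (d - b) * (f - b)) * (hQ - hP)
        - 2 * (b * (c - a) - a * (d - b)) * h
    have h2 : ((e - a) ^ 2 + (f - b) ^ 2) *
        ((c - a) ^ 2 + (d - b) ^ 2 - ((c - a) * (e - a) + (d - b) * (f - b))) = 0 := by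
      linear_combination ((e - a) ^ 2 + (f - b) ^ 2) * (hQ - hP)
        - ((c - a) * (e - a) + (d - b) * (f - b)) * (hR - hP)
        + 2 * (b * (e - a) - a * (f - b)) * h
    linear_combination ((e - a) ^ 2 + (f - b) ^ 2) * h1 + ((c - a) ^ 2 + (d - b) ^ 2) * h2
  have pos : ∀ {x y z t : ℝ}, (x, y) ≠ (z, t) → 0 < (z - x) ^ 2 + (t - y) ^ 2 := by
    intro x y z t hne
    refine normSq_pos fun h0 => hne ?_
    rw [Prod.mk.injEq, sub_eq_zero, sub_eq_zero] at h0
    rw [h0.1, h0.2]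
  exact (mul_pos (mul_pos (pos hPQ) (pos hPR)) (pos hQR)).ne' key

/-- If the functional `(p, q)` takes equal values at `P` and `R`, then the side of the line `PR`
on which `Q` lies is read off from the value of the functional at `Q`. -/
lemma orient_mul_normSq {p q : ℝ} {P R : ℝ × ℝ} (h : p * P.1 + q * P.2 = p * R.1 + q * R.2)
    (Q : ℝ × ℝ) :
    (p ^ 2 + q ^ 2) * orient Q P R =
      (p * (R.2 - P.2) - q * (R.1 - P.1)) * ((p * P.1 + q * P.2) - (p * Q.1 + q * Q.2)) := by
  simp only [orient]
  linear_combination (p * (P.2 - Q.2) - q * (P.1 - Q.1)) * h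

/-! ### Supporting lines of planar convex sets -/

lemma exists_support {K : Set (ℝ × ℝ)} (hK : Convex ℝ K) (hne : (interior K).Nonempty)
    {x : ℝ × ℝ} (hx : x ∈ frontier K) :
    ∃ p q : ℝ, (p, q) ≠ (0, 0) ∧ ∀ y ∈ K, p * y.1 + q * y.2 ≤ p * x.1 + q * x.2 := by
  obtain ⟨f, hf⟩ := geometric_hahn_banach_open_point hK.interior isOpen_interior hx.2
  have hf' : ∀ y : ℝ × ℝ, f y = f (1, 0) * y.1 + f (0, 1) * y.2 := by
    rintro ⟨a, b⟩
    have : ((a, b) : ℝ × ℝ) = a • (1, 0) + b • (0, 1) := by simp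
    rw [this, map_add, map_smul, map_smul]
    simp [mul_comm]
  refine ⟨f (1, 0), f (0, 1), ?_, ?_⟩
  · intro h
    obtain ⟨y, hy⟩ := hne
    have h1 := hf y hy
    rw [Prod.mk.injEq] at h
    rw [hf' y, hf' x, h.1, h.2] at h1
    simp at h1
  · intro y hy
    rw [← hf', ← hf']
    have hy' : y ∈ closure (interior K) := by
      rw [hK.closure_interior_eq_closure_of_nonempty_interior hne]
      exact subset_closure hy
    exact closure_minimal (fun z hz => (hf z hz).le)
      (isClosed_le f.continuous continuous_const) hy'

lemma mem_frontier_of_support {K : Set (ℝ × ℝ)} {x : ℝ × ℝ} (hx : x ∈ K) {p q : ℝ}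
    (h0 : (p, q) ≠ (0, 0)) (h : ∀ y ∈ K, p * y.1 + q * y.2 ≤ p * x.1 + q * x.2) :
    x ∈ frontier K := by
  refine ⟨subset_closure hx, fun hi => ?_⟩
  -- Moving from `x` in the direction `(p, q)` increases the functional.
  have hc : ContinuousAt (fun t : ℝ => x + t • ((p, q) : ℝ × ℝ)) 0 := by fun_prop
  have he : ∀ᶠ t in nhds (0 : ℝ), x + t • ((p, q) : ℝ × ℝ) ∈ K := by
    apply hc.eventually_mem
    simpa using mem_interior_iff_mem_nhds.1 hi
  obtain ⟨ε, hε, hball⟩ := Metric.eventually_nhds_iff.1 he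
  have hm := h _ (hball (y := ε / 2) (by simp [abs_of_pos hε]; linarith))
  simp only [Prod.fst_add, Prod.snd_add, Prod.smul_mk, smul_eq_mul] at hm
  have := mul_pos (half_pos hε) (normSq_pos h0)
  nlinarith

/-- A set containing the vertices of a nondegenerate triangle has a convex hull with interior:
the points with positive barycentric coordinates form an open set. -/
lemma interior_hull_nonempty {S : Set (ℝ × ℝ)} {P Q R : ℝ × ℝ} (hP : P ∈ S) (hQ : Q ∈ S)
    (hR : R ∈ S) (hD : orient P Q R ≠ 0) : (interior (convexHull ℝ S)).Nonempty := by
  set D := orient P Q R with hDdef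
  have hopen : IsOpen {X : ℝ × ℝ | 0 < orient X Q R / D ∧ 0 < orient P X R / D ∧
      0 < orient P Q X / D} := by
    unfold orient
    exact (isOpen_lt continuous_const (by fun_prop : Continuous fun X : ℝ × ℝ =>
        ((Q.1 - X.1) * (R.2 - X.2) - (R.1 - X.1) * (Q.2 - X.2)) / D)).inter
      ((isOpen_lt continuous_const (by fun_prop : Continuous fun X : ℝ × ℝ =>
        ((X.1 - P.1) * (R.2 - P.2) - (R.1 - P.1) * (X.2 - P.2)) / D)).inter
      (isOpen_lt continuous_const (by fun_prop : Continuous fun X : ℝ × ℝ =>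
        ((Q.1 - P.1) * (X.2 - P.2) - (X.1 - P.1) * (Q.2 - P.2)) / D)))
  refine ⟨((P.1 + Q.1 + R.1) / 3, (P.2 + Q.2 + R.2) / 3), mem_interior.2 ⟨_, ?_, hopen, ?_⟩⟩
  · rintro X ⟨h1, h2, h3⟩
    have hsum : orient X Q R / D + orient P X R / D + orient P Q X / D = 1 := by
      field_simp
      rw [hDdef]; unfold orient; ring
    have hX : X = (orient X Q R / D) • P + (orient P X R / D) • Q + (orient P Q X / D) • R := by
      ext
      · simp only [Prod.fst_add, Prod.smul_fst, smul_eq_mul]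
        field_simp
        rw [hDdef]; unfold orient; ring
      · simp only [Prod.snd_add, Prod.smul_snd, smul_eq_mul]
        field_simp
        rw [hDdef]; unfold orient; ring
    rw [hX]
    have hc := convex_convexHull ℝ S
    have hmem := hc.sum_mem (t := Finset.univ)
      (w := ![orient X Q R / D, orient P X R / D, orient P Q X / D]) (z := ![P, Q, R])
      (by intro i _; fin_cases i <;> simp [h1.le, h2.le, h3.le])
      (by simpa [Fin.sum_univ_three] using hsum)
      (by intro i _; fin_cases i <;> exact subset_convexHull ℝ S (by assumption))
    simpa [Fin.sum_univ_three] using hmem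
  · have e : ∀ z : ℝ, z = D / 3 → 0 < z / D := by
      rintro z rfl
      have : D / 3 / D = 1 / 3 := by field_simp
      rw [this]; norm_num
    refine ⟨e _ ?_, e _ ?_, e _ ?_⟩ <;> · rw [hDdef]; unfold orient; ring

/-! ### Neighbouring vertices -/

/-- The vertices `a` and `b` are neighbours: all other vertices lie strictly on one side of the
line through them. -/
def Nbr (n : ℕ) (σ : ℕ → ℝ) (a b : ℕ) : Prop :=
  ∀ j < n, ∀ k < n, j ≠ a → j ≠ b → k ≠ a → k ≠ b →
    0 < orient (Vtx σ j) (Vtx σ a) (Vtx σ b) * orient (Vtx σ k) (Vtx σ a) (Vtx σ b)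

lemma Nbr.symm {n : ℕ} {σ : ℕ → ℝ} {a b : ℕ} (h : Nbr n σ a b) : Nbr n σ b a := by
  intro j hj k hk h1 h2 h3 h4
  have := h j hj k hk h2 h1 h4 h3
  unfold orient at *
  nlinarith

/-- If `b`, `c`, `d` were all neighbours of `a`, then each of the lines `ab`, `ac`, `ad` would have
the other two points on the same side. The signs of the triangles `abc`, `abd`, `acd` cannot
satisfy all three conditions. -/
lemma no_three_neighbours {n : ℕ} {σ : ℕ → ℝ} {a b c d : ℕ} (hb : b < n) (hc : c < n) (hd : d < n)
    (hab : a ≠ b) (hac : a ≠ c) (had : a ≠ d) (hbc : b ≠ c) (hbd : b ≠ d) (hcd : c ≠ d)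
    (h1 : Nbr n σ a b) (h2 : Nbr n σ a c) (h3 : Nbr n σ a d) : False := by
  have e1 := h1 c hc d hd hac.symm hbc.symm had.symm hbd.symm
  have e2 := h2 b hb d hd hab.symm hbc had.symm hcd.symm
  have e3 := h3 b hb c hc hab.symm hbd hac.symm hcd
  set A := Vtx σ a
  set B := Vtx σ b
  set C := Vtx σ c
  set D := Vtx σ d
  have i1 : orient B A C = -orient C A B := by unfold orient; ring
  have i2 : orient B A D = -orient D A B := by unfold orient; ring
  have i3 : orient C A D = -orient D A C := by unfold orient; ring
  rw [i1] at e2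
  rw [i2, i3] at e3
  have := mul_pos (mul_pos e1 e2) e3
  have h := sq_nonneg (orient C A B * orient D A B * orient D A C)
  nlinarith

lemma vtx_circle (σ : ℕ → ℝ) (i : ℕ) : (Vtx σ i).1 ^ 2 + (Vtx σ i).2 ^ 2 = 1 := by
  simp [Vtx]

lemma vtx_succ {n : ℕ} {σ : ℕ → ℝ} (hσ0 : σ 0 = 0) {w : ℤ} (hw : σ n = 2 * π * w) {i : ℕ}
    (hi : i < n) : Vtx σ (i + 1) = Vtx σ (oplus n i) := by
  unfold oplus
  split_ifs with h
  · rfl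
  · have : i + 1 = n := by omega
    rw [this]
    simp only [Vtx, hσ0, hw]
    rw [mul_comm (2 * π)]
    simp [Real.cos_int_mul_two_pi, Real.sin_eq_zero_iff]
    exact ⟨w * 2, by push_cast; ring⟩

lemma oplus_lt {n i : ℕ} (hn : 3 ≤ n) : oplus n i < n := by
  unfold oplus; split_ifs <;> omega

lemma oplus_ne {n i : ℕ} (hn : 3 ≤ n) (hi : i < n) : oplus n i ≠ i := by
  unfold oplus; split_ifs <;> omega

/-- Neighbours are consecutive: `a` already has its predecessor and its successor as neighbours, and
these two are distinct because `n ≥ 3`. -/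
lemma Nbr.consecutive {n : ℕ} {σ : ℕ → ℝ} (hn : 3 ≤ n) (hN : ∀ i < n, Nbr n σ i (oplus n i))
    {a b : ℕ} (ha : a < n) (hb : b < n) (hab : a ≠ b) (h : Nbr n σ a b) :
    b = oplus n a ∨ a = oplus n b := by
  obtain ⟨c, hc, hca⟩ : ∃ c < n, oplus n c = a := by
    rcases Nat.eq_zero_or_pos a with h0 | h0
    · exact ⟨n - 1, by omega, by unfold oplus; split_ifs <;> omega⟩
    · exact ⟨a - 1, by omega, by unfold oplus; split_ifs <;> omega⟩
  by_contra hcon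
  push Not at hcon
  have hcN : Nbr n σ a c := by
    have := hN c hc
    rw [hca] at this
    exact this.symm
  have hac : a ≠ c := by rintro rfl; exact oplus_ne hn ha hca
  have hbc : b ≠ c := by rintro rfl; exact hcon.2 hca.symm
  have hcs : c ≠ oplus n a := by
    intro h
    revert hca h
    unfold oplus
    split_ifs <;> omega
  exact no_three_neighbours hb hc (oplus_lt hn) hab hac (oplus_ne hn ha).symm hbc hcon.1 hcs
    h hcN (hN a ha)

/-- A supporting functional maximal at two vertices is strictly smaller at all the others. -/
lemma lt_of_support {n : ℕ} {σ : ℕ → ℝ} (hord : Ordinary n σ) {p q c : ℝ} (h0 : (p, q) ≠ (0, 0))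
    (hle : ∀ j < n, p * (Vtx σ j).1 + q * (Vtx σ j).2 ≤ c) {a b : ℕ} (ha : a < n) (hb : b < n)
    (hab : a ≠ b) (hac : p * (Vtx σ a).1 + q * (Vtx σ a).2 = c)
    (hbc : p * (Vtx σ b).1 + q * (Vtx σ b).2 = c) {j : ℕ} (hj : j < n) (hja : j ≠ a)
    (hjb : j ≠ b) : p * (Vtx σ j).1 + q * (Vtx σ j).2 < c := by
  refine lt_of_le_of_ne (hle j hj) fun he => ?_
  have h1 := orient_mul_normSq (hac.trans hbc.symm) (Vtx σ j)
  rw [he, hac, sub_self, mul_zero] at h1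
  exact (mul_ne_zero (normSq_pos h0).ne' (orient_ne_zero (vtx_circle σ j) (vtx_circle σ a)
    (vtx_circle σ b) (fun h => hja (hord j hj a ha h)) (fun h => hjb (hord j hj b hb h))
    (fun h => hab (hord a ha b hb h)))) h1

lemma nbr_of_support {n : ℕ} {σ : ℕ → ℝ} (hord : Ordinary n σ) {p q c : ℝ} (h0 : (p, q) ≠ (0, 0))
    (hle : ∀ j < n, p * (Vtx σ j).1 + q * (Vtx σ j).2 ≤ c) {a b : ℕ} (ha : a < n) (hb : b < n)
    (hab : a ≠ b) (hac : p * (Vtx σ a).1 + q * (Vtx σ a).2 = c)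
    (hbc : p * (Vtx σ b).1 + q * (Vtx σ b).2 = c) : Nbr n σ a b := by
  intro j hj k hk hja hjb hka hkb
  have l1 := lt_of_support hord h0 hle ha hb hab hac hbc hj hja hjb
  have l2 := lt_of_support hord h0 hle ha hb hab hac hbc hk hka hkb
  have e1 := orient_mul_normSq (hac.trans hbc.symm) (Vtx σ j)
  have e2 := orient_mul_normSq (hac.trans hbc.symm) (Vtx σ k)
  rw [hac] at e1 e2
  have hN := normSq_pos h0
  have hs : p * ((Vtx σ b).2 - (Vtx σ a).2) - q * ((Vtx σ b).1 - (Vtx σ a).1) ≠ 0 := by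
    intro hs
    rw [hs, zero_mul] at e1
    exact (mul_ne_zero hN.ne' (orient_ne_zero (vtx_circle σ j) (vtx_circle σ a)
      (vtx_circle σ b) (fun h => hja (hord j hj a ha h)) (fun h => hjb (hord j hj b hb h))
      (fun h => hab (hord a ha b hb h)))) e1
  refine pos_of_mul_pos_right (a := (p ^ 2 + q ^ 2) ^ 2) ?_ (by positivity)
  have hh := mul_pos (pow_pos (abs_pos.2 hs) 2) (mul_pos (sub_pos.2 l1) (sub_pos.2 l2))
  rw [sq_abs] at hh
  calc _ < _ := hh
    _ = ((p ^ 2 + q ^ 2) * orient (Vtx σ j) (Vtx σ a) (Vtx σ b)) *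
        ((p ^ 2 + q ^ 2) * orient (Vtx σ k) (Vtx σ a) (Vtx σ b)) := by rw [e1, e2]; ring
    _ = _ := by ring

lemma det_same_sign_iff_nbr {n : ℕ} {σ : ℕ → ℝ} {a b : ℕ} :
    ((∀ j < n, j ≠ a → j ≠ b → 0 < Det3 σ j a b) ∨
      (∀ j < n, j ≠ a → j ≠ b → Det3 σ j a b < 0)) ↔ Nbr n σ a b := by
  simp only [det3_eq_orient]
  constructor
  · rintro (h | h) j hj k hk h1 h2 h3 h4
    · exact mul_pos (h j hj h1 h2) (h k hk h3 h4)
    · exact mul_pos_of_neg_of_neg (h j hj h1 h2) (h k hk h3 h4)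
  · intro h
    by_cases hex : ∃ j < n, j ≠ a ∧ j ≠ b ∧ 0 < orient (Vtx σ j) (Vtx σ a) (Vtx σ b)
    · obtain ⟨j, hj, h1, h2, hpos⟩ := hex
      exact Or.inl fun k hk h3 h4 => (pos_iff_pos_of_mul_pos (h j hj k hk h1 h2 h3 h4)).1 hpos
    · push Not at hex
      refine Or.inr fun k hk h3 h4 => lt_of_le_of_ne (hex k hk h3 h4) fun h0 => ?_
      have := h k hk k hk h3 h4 h3 h4
      simp [h0] at this

/-! ### The frontier of the convex hull -/

/-- The segment between two distinct neighbours lies in the frontier of the convex hull: `orient`,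
up to sign, is an affine functional that is constant on it and maximal there. -/
lemma Nbr.segment_subset_frontier {n : ℕ} {σ : ℕ → ℝ} (hord : Ordinary n σ) {a b : ℕ} (ha : a < n)
    (hb : b < n) (hab : a ≠ b) (h : Nbr n σ a b) :
    segment ℝ (Vtx σ a) (Vtx σ b) ⊆ frontier (convexHull ℝ {p | ∃ i < n, p = Vtx σ i}) := by
  obtain ⟨s, hs, hsl⟩ : ∃ s : ℝ, s ≠ 0 ∧
      ∀ j < n, s * orient (Vtx σ j) (Vtx σ a) (Vtx σ b) ≤ 0 := by
    have self : ∀ j, j = a ∨ j = b → orient (Vtx σ j) (Vtx σ a) (Vtx σ b) = 0 := by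
      rintro j (rfl | rfl) <;> · unfold orient; ring
    rcases det_same_sign_iff_nbr.2 h with h | h
    · refine ⟨-1, by norm_num, fun j hj => ?_⟩
      by_cases hj' : j = a ∨ j = b
      · simp [self j hj']
      · push Not at hj'
        have := h j hj hj'.1 hj'.2
        rw [det3_eq_orient] at this
        linarith
    · refine ⟨1, by norm_num, fun j hj => ?_⟩
      by_cases hj' : j = a ∨ j = b
      · simp [self j hj']
      · push Not at hj'
        have := h j hj hj'.1 hj'.2
        rw [det3_eq_orient] at this
        linarith
  intro x hx
  have hV : ∀ i < n, Vtx σ i ∈ convexHull ℝ {p | ∃ i < n, p = Vtx σ i} :=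
    fun i hi => subset_convexHull ℝ _ ⟨i, hi, rfl⟩
  have hxK : x ∈ convexHull ℝ {p | ∃ i < n, p = Vtx σ i} :=
    (convex_convexHull ℝ _).segment_subset (hV a ha) (hV b hb) hx
  obtain ⟨u, v, hu, hv, huv, rfl⟩ := hx
  set A := Vtx σ a with hA
  set B := Vtx σ b with hB
  refine mem_frontier_of_support hxK (p := s * (A.2 - B.2)) (q := s * (B.1 - A.1)) ?_ ?_
  · intro h0
    simp only [Prod.mk.injEq, mul_eq_zero, hs, false_or] at h0
    exact hab (hord a ha b hb (Prod.ext (by linarith [h0.2]) (by linarith [h0.1])))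
  · have hv' : v = 1 - u := by linarith
    have hc : Convex ℝ {y : ℝ × ℝ | s * (A.2 - B.2) * y.1 + s * (B.1 - A.1) * y.2 ≤
        s * (A.2 - B.2) * (u • A + v • B).1 + s * (B.1 - A.1) * (u • A + v • B).2} :=
      convex_halfSpace_le (IsLinearMap.mk (by intro x y; simp; ring) (by intro x y; simp; ring)) _
    refine fun y hy => convexHull_min ?_ hc hy
    rintro _ ⟨j, hj, rfl⟩
    have := hsl j hj
    simp only [orient, mem_ofPred_eq, Prod.fst_add, Prod.snd_add, Prod.smul_fst, Prod.smul_snd,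
      smul_eq_mul] at this ⊢
    rw [hv']
    nlinarith

/-- A point of the convex hull at which a functional is maximal is a convex combination of any
two vertices that include all those at which the functional attains this maximum. -/
lemma mem_segment_of_support {n : ℕ} {V : ℕ → ℝ × ℝ} {x : ℝ × ℝ}
    (hx : x ∈ convexHull ℝ {p | ∃ i < n, p = V i}) {p q : ℝ} {a b : ℕ} (ha : a < n) (hb : b < n)
    (hab : a ≠ b)
    (hlt : ∀ j < n, j ≠ a → j ≠ b → p * (V j).1 + q * (V j).2 < p * x.1 + q * x.2)
    (hle : ∀ j < n, p * (V j).1 + q * (V j).2 ≤ p * x.1 + q * x.2) :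
    x ∈ segment ℝ (V a) (V b) := by
  obtain ⟨w, hw0, hw1, hwx⟩ : ∃ w : ℕ → ℝ, (∀ j ∈ Finset.range n, 0 ≤ w j) ∧
      ∑ j ∈ Finset.range n, w j = 1 ∧ ∑ j ∈ Finset.range n, w j • V j = x := by
    refine convexHull_min (t := {x | ∃ w : ℕ → ℝ, (∀ j ∈ Finset.range n, 0 ≤ w j) ∧
      ∑ j ∈ Finset.range n, w j = 1 ∧ ∑ j ∈ Finset.range n, w j • V j = x}) ?_ ?_ hx
    · rintro _ ⟨i, hi, rfl⟩
      refine ⟨fun j => if j = i then 1 else 0, fun j _ => ?_, ?_, ?_⟩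
      · dsimp only; split_ifs <;> norm_num
      · simp [hi]
      · simp [ite_smul, hi]
    · rintro _ ⟨w₁, h1, h1', rfl⟩ _ ⟨w₂, h2, h2', rfl⟩ s t hs ht hst
      refine ⟨fun j => s * w₁ j + t * w₂ j, fun j hj => ?_, ?_, ?_⟩
      · have := h1 j hj
        have := h2 j hj
        positivity
      · rw [Finset.sum_add_distrib, ← Finset.mul_sum, ← Finset.mul_sum, h1', h2']
        linarith
      · simp only [add_smul, mul_smul, Finset.sum_add_distrib, Finset.smul_sum]
  have hz : ∀ j ∈ Finset.range n,
      w j * ((p * x.1 + q * x.2) - (p * (V j).1 + q * (V j).2)) = 0 := by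
    rw [← Finset.sum_eq_zero_iff_of_nonneg
      fun j hj => mul_nonneg (hw0 j hj) (sub_nonneg.2 (hle j (Finset.mem_range.1 hj)))]
    have h1 : x.1 = ∑ j ∈ Finset.range n, w j * (V j).1 := by
      rw [← hwx, Prod.fst_sum]; rfl
    have h2 : x.2 = ∑ j ∈ Finset.range n, w j * (V j).2 := by
      rw [← hwx, Prod.snd_sum]; rfl
    calc _ = (∑ j ∈ Finset.range n, w j) * (p * x.1 + q * x.2)
          - (p * ∑ j ∈ Finset.range n, w j * (V j).1
            + q * ∑ j ∈ Finset.range n, w j * (V j).2) := by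
          rw [Finset.sum_mul, Finset.mul_sum, Finset.mul_sum, ← Finset.sum_add_distrib,
            ← Finset.sum_sub_distrib]
          exact Finset.sum_congr rfl fun j _ => by ring
      _ = 0 := by rw [hw1, ← h1, ← h2]; ring
  have hw : ∀ j ∈ Finset.range n, j ∉ ({a, b} : Finset ℕ) → w j = 0 := by
    intro j hj hjab
    simp only [Finset.mem_insert, Finset.mem_singleton, not_or] at hjab
    exact (mul_eq_zero.1 (hz j hj)).resolve_right
      (sub_pos.2 (hlt j (Finset.mem_range.1 hj) hjab.1 hjab.2)).ne'
  have hsub : ({a, b} : Finset ℕ) ⊆ Finset.range n := by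
    intro j hj
    simp only [Finset.mem_insert, Finset.mem_singleton] at hj
    rcases hj with rfl | rfl <;> simpa
  refine ⟨w a, w b, hw0 a (by simpa), hw0 b (by simpa), ?_, ?_⟩
  · rw [← hw1, ← Finset.sum_subset hsub hw, Finset.sum_pair hab]
  · rw [← hwx, ← Finset.sum_subset hsub fun j hj hj' => by rw [hw j hj hj', zero_smul],
      Finset.sum_pair hab]

theorem convex_iff_det_same_sign
    (n : ℕ) (hn : 3 ≤ n) (σ : ℕ → ℝ) (hσ0 : σ 0 = 0)
    (hθ : ∀ i < n, σ (i + 1) - σ i ∈ Set.Ioc (-π) π)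
    (w : ℤ) (hw : σ n = 2 * π * w)
    (hord : Ordinary n σ) :
    IsConvexPolygon n σ ↔
      ∀ i < n,
        (∀ j < n, j ≠ i → j ≠ oplus n i → 0 < Det3 σ j i (oplus n i)) ∨
        (∀ j < n, j ≠ i → j ≠ oplus n i → Det3 σ j i (oplus n i) < 0) := by
  simp only [det_same_sign_iff_nbr]
  have hedges : (⋃ i ∈ Finset.range n, segment ℝ (Vtx σ i) (Vtx σ (i + 1))) =
      ⋃ i ∈ Finset.range n, segment ℝ (Vtx σ i) (Vtx σ (oplus n i)) :=
    iUnion₂_congr fun i hi => by rw [vtx_succ hσ0 hw (Finset.mem_range.1 hi)]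
  unfold IsConvexPolygon
  rw [hedges]
  set S := {p | ∃ i < n, p = Vtx σ i} with hS
  have hVS : ∀ i < n, Vtx σ i ∈ convexHull ℝ S := fun i hi => subset_convexHull ℝ _ ⟨i, hi, rfl⟩
  have hint : (interior (convexHull ℝ S)).Nonempty := by
    refine interior_hull_nonempty (P := Vtx σ 0) (Q := Vtx σ 1) (R := Vtx σ 2)
      ⟨0, by omega, rfl⟩ ⟨1, by omega, rfl⟩ ⟨2, by omega, rfl⟩
      (orient_ne_zero (vtx_circle σ 0) (vtx_circle σ 1) (vtx_circle σ 2) ?_ ?_ ?_)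
    · exact fun h => absurd (hord 0 (by omega) 1 (by omega) h) (by norm_num)
    · exact fun h => absurd (hord 0 (by omega) 2 (by omega) h) (by norm_num)
    · exact fun h => absurd (hord 1 (by omega) 2 (by omega) h) (by norm_num)
  constructor
  · intro hconv i hi
    have hi' : oplus n i < n := oplus_lt hn
    have hm : midpoint ℝ (Vtx σ i) (Vtx σ (oplus n i)) ∈ frontier (convexHull ℝ S) := by
      rw [← hconv]
      exact mem_iUnion₂.2 ⟨i, Finset.mem_range.2 hi, midpoint_mem_segment _ _⟩
    obtain ⟨p, q, h0, hle⟩ := exists_support (convex_convexHull ℝ S) hint hm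
    have l1 := hle _ (hVS i hi)
    have l2 := hle _ (hVS _ hi')
    have hmid : p * (midpoint ℝ (Vtx σ i) (Vtx σ (oplus n i))).1
        + q * (midpoint ℝ (Vtx σ i) (Vtx σ (oplus n i))).2 =
        ((p * (Vtx σ i).1 + q * (Vtx σ i).2)
          + (p * (Vtx σ (oplus n i)).1 + q * (Vtx σ (oplus n i)).2)) / 2 := by
      simp [midpoint_eq_smul_add]; ring
    exact nbr_of_support hord h0 (fun j hj => hle _ (hVS j hj)) hi hi' (oplus_ne hn hi).symm
      (by linarith) (by linarith)
  · intro hN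
    refine Subset.antisymm (iUnion₂_subset fun i hi => ?_) fun x hx => ?_
    · have hi := Finset.mem_range.1 hi
      exact (hN i hi).segment_subset_frontier hord hi (oplus_lt hn) (oplus_ne hn hi).symm
    · have hfin : S.Finite := by
        have : S = Vtx σ '' (Finset.range n : Set ℕ) := by ext y; simp [hS, eq_comm]
        rw [this]
        exact (Finset.finite_toSet _).image _
      have hxK : x ∈ convexHull ℝ S := hfin.isClosed_convexHull ℝ |>.frontier_subset hx
      obtain ⟨p, q, h0, hle⟩ := exists_support (convex_convexHull ℝ S) hint hx
      have hle' : ∀ j < n, p * (Vtx σ j).1 + q * (Vtx σ j).2 ≤ p * x.1 + q * x.2 :=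
        fun j hj => hle _ (hVS j hj)
      obtain ⟨a, ha, hax⟩ : ∃ a < n, p * (Vtx σ a).1 + q * (Vtx σ a).2 = p * x.1 + q * x.2 := by
        by_contra hcon
        push Not at hcon
        have hc : Convex ℝ {y : ℝ × ℝ | p * y.1 + q * y.2 < p * x.1 + q * x.2} :=
          convex_halfSpace_lt
            (IsLinearMap.mk (by intro x y; simp; ring) (by intro x y; simp; ring)) _
        have : x ∈ {y : ℝ × ℝ | p * y.1 + q * y.2 < p * x.1 + q * x.2} := by
          refine convexHull_min ?_ hc hxK
          rintro _ ⟨j, hj, rfl⟩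
          exact lt_of_le_of_ne (hle' j hj) (hcon j hj)
        exact lt_irrefl (p * x.1 + q * x.2) this
      by_cases hb : ∃ b < n, b ≠ a ∧ p * (Vtx σ b).1 + q * (Vtx σ b).2 = p * x.1 + q * x.2
      · obtain ⟨b, hb, hba, hbx⟩ := hb
        have hseg := mem_segment_of_support hxK ha hb hba.symm
          (fun j hj h1 h2 => lt_of_support hord h0 hle' ha hb hba.symm hax hbx hj h1 h2) hle'
        rcases (nbr_of_support hord h0 hle' ha hb hba.symm hax hbx).consecutive hn hN ha hb
          hba.symm with rfl | rfl
        · exact mem_iUnion₂.2 ⟨a, Finset.mem_range.2 ha, hseg⟩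
        · exact mem_iUnion₂.2 ⟨b, Finset.mem_range.2 hb, by rwa [segment_symm]⟩
      · push Not at hb
        exact mem_iUnion₂.2 ⟨a, Finset.mem_range.2 ha, mem_segment_of_support hxK ha (oplus_lt hn)
          (oplus_ne hn ha).symm
          (fun j hj h1 _ => lt_of_le_of_ne (hle' j hj) (hb j hj h1)) hle'⟩
end
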